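/- arXiv:2312.09083 — 2 statements merged into one kernel-verified Lean document; each statement's English description precedes it below -/
import Mathlib

section
/- Let n ≥ 1, let G = (V, E) ∈ 𝒢_{n,1} be reduced, let Σ be a topological space with a Borel probability measure μ, let f : Σ → ℝ be a bounded continuous function with f ≥ 0, and let ν : E → ℝ assign a nonnegative real to each edge. Define bounded continuous A : Σ → (n × n real matrices) and b : Σ → ℝⁿ by A(σ)_{ij} = f(σ)^{ν((α_j, α_i))} if (α_j, α_i) ∈ E and 0 otherwise, and b(σ)_i = f(σ)^{ν((β, α_i))} if (β, α_i) ∈ E and 0 otherwise. For a walk τ = v_0, v_1, …, v_k set ν(τ) := Σ_{t=0}^{k−1} ν((v_t, v_{t+1})). Then for every j ≥ 1 and every i ∈ {1, …, n}: if α_i ∈ V(j), the i-th entry of ∫_Σ A(σ)^{j−1} b(σ) dμ(σ) equals ∫_Σ f(σ)^{ν(τ)} dμ(σ), where τ is the unique walk of length j from β to α_i; and it equals 0 if α_i ∉ V(j). -/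
open MeasureTheory

/-- Node type for digraphs in `𝒢_{n,1}`: `none` is the control node `β`,
`some i` is the state node `α_i`. -/
abbrev Node (n : ℕ) := Option (Fin n)

/-- `w` is a walk of length `k` from `u` to `v` in the digraph with edge set `E`. -/
def IsWalk {V : Type*} (E : Set (V × V)) (k : ℕ) (w : ℕ → V) (u v : V) : Prop :=
  w 0 = u ∧ w k = v ∧ ∀ t < k, (w t, w (t + 1)) ∈ E

/-- A path is a walk with no repeated node. -/
def IsPath {V : Type*} (E : Set (V × V)) (k : ℕ) (w : ℕ → V) (u v : V) : Prop :=
  IsWalk E k w u v ∧ ∀ s ≤ k, ∀ t ≤ k, w s = w t → s = t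

/-- A cycle of length `k ≥ 1` from `u` to itself, all nodes pairwise distinct except
the coinciding endpoints. -/
def IsCycle {V : Type*} (E : Set (V × V)) (k : ℕ) (w : ℕ → V) (u : V) : Prop :=
  1 ≤ k ∧ IsWalk E k w u u ∧ ∀ s < k, ∀ t < k, w s = w t → s = t

def Reachable {V : Type*} (E : Set (V × V)) (u v : V) : Prop :=
  ∃ k w, IsWalk E k w u v

/-- `u` lies on a cycle of the digraph. -/
def OnCycle {V : Type*} (E : Set (V × V)) (u : V) : Prop :=
  ∃ k w, IsCycle E k w u

def WeaklyConnected {V : Type*} (E : Set (V × V)) : Prop :=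
  ∀ u v : V, ∃ (k : ℕ) (w : ℕ → V), w 0 = u ∧ w k = v ∧
    ∀ t < k, (w t, w (t + 1)) ∈ E ∨ (w (t + 1), w t) ∈ E

/-- Membership in the class `𝒢_{n,1}`: no edge ends at `β` and the digraph is
weakly connected. -/
def MemG (n : ℕ) (E : Set (Node n × Node n)) : Prop :=
  (∀ e ∈ E, e.2 ≠ (none : Node n)) ∧ WeaklyConnected E

/-- `V⁺_cyc`: nodes reachable by a walk from some node lying on a cycle. -/
def CycSucc {V : Type*} (E : Set (V × V)) : Set V :=
  {v | ∃ u, OnCycle E u ∧ Reachable E u v}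

/-- The node set of the core relative to a node set `N`: `N \ V⁺_cyc`. -/
def CoreOn {W : Type*} (N : Set W) (F : Set (W × W)) : Set W := N \ CycSucc F

/-- The node set `V*` of the core `G*` of `G`. -/
def CoreNodes (n : ℕ) (E : Set (Node n × Node n)) : Set (Node n) :=
  CoreOn Set.univ E

/-- The core of `G` contains a directed spanning path: a path of `G` whose node set
is exactly `V*`. -/
def HasCoreSpanningPath (n : ℕ) (E : Set (Node n × Node n)) : Prop :=
  ∃ (k : ℕ) (w : ℕ → Node n) (u v : Node n), IsPath E k w u v ∧
    {x | ∃ t ≤ k, w t = x} = CoreNodes n E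

/-- A compliant pair `(A, b) ∈ 𝕍(G)`: bounded continuous, with the sparsity
pattern dictated by the edge set `E`. -/
def Compliant {n : ℕ} {S : Type*} [TopologicalSpace S] (E : Set (Node n × Node n))
    (A : S → Fin n → Fin n → ℝ) (b : S → Fin n → ℝ) : Prop :=
  Continuous A ∧ Continuous b ∧
  (∃ C, ∀ σ i j, |A σ i j| ≤ C) ∧ (∃ C, ∀ σ i, |b σ i| ≤ C) ∧
  (∀ σ (i j : Fin n), ((some j : Node n), (some i : Node n)) ∉ E → A σ i j = 0) ∧
  (∀ σ (i : Fin n), ((none : Node n), (some i : Node n)) ∉ E → b σ i = 0)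

/-- The averaged-controllability rank criterion: the span of the Bochner integrals
`∫ A(σ)^k b(σ) dμ`, `k ∈ ℕ`, is all of `ℝⁿ`. -/
def RankCriterion {n : ℕ} {S : Type*} [MeasurableSpace S]
    (μ : Measure S) (A : S → Fin n → Fin n → ℝ) (b : S → Fin n → ℝ) : Prop :=
  Submodule.span ℝ {x : Fin n → ℝ |
    ∃ k : ℕ, x = ∫ σ, (Matrix.of (A σ) ^ k).mulVec (b σ) ∂μ} = ⊤

/-- `S` is a topological manifold of dimension `d`. -/
def IsTopManifold (d : ℕ) (S : Type*) [TopologicalSpace S] : Prop :=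
  ∀ x : S, ∃ U : Set S, IsOpen U ∧ x ∈ U ∧
    ∃ W : Set (EuclideanSpace ℝ (Fin d)), IsOpen W ∧ Nonempty (↥U ≃ₜ ↥W)

/-- The support of `μ` contains a nonempty open set. -/
def SupportHasOpen {S : Type*} [TopologicalSpace S] [MeasurableSpace S]
    (μ : Measure S) : Prop :=
  ∃ U : Set S, IsOpen U ∧ U.Nonempty ∧ ∀ W ⊆ U, IsOpen W → W.Nonempty → 0 < μ W

/-- There is exactly one path from `u` to `v`. -/
def UniquePathFrom {V : Type*} (E : Set (V × V)) (u v : V) : Prop :=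
  (∃ k w, IsPath E k w u v) ∧
  ∀ (k : ℕ) (w : ℕ → V) (k' : ℕ) (w' : ℕ → V),
    IsPath E k w u v → IsPath E k' w' u v → k = k' ∧ ∀ t ≤ k, w t = w' t

/-- A directed tree on the node set `N`: there is a unique root, from which every node
is reachable by a unique path. -/
def IsDirectedTree {W : Type*} (N : Set W) (F : Set (W × W)) : Prop :=
  ∃ r ∈ N, (∀ v ∈ N, UniquePathFrom F r v) ∧
    (∀ r' ∈ N, (∀ v ∈ N, Reachable F r' v) → r' = r)

/-- The strong component of `u`: nodes mutually reachable with `u`. -/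
def StrongComp {V : Type*} (E : Set (V × V)) (u : V) : Set V :=
  {v | Reachable E u v ∧ Reachable E v u}

/-- The nodes of the skeleton graph (condensation): the strong components. -/
def SkelNodes {V : Type*} (E : Set (V × V)) : Set (Set V) :=
  {C | ∃ u, C = StrongComp E u}

/-- The edges of the skeleton graph: `(C, C')` is an edge whenever some edge of `E`
goes from a node of `C` to a node of `C'`. -/
def SkelEdges {V : Type*} (E : Set (V × V)) : Set (Set V × Set V) :=
  {p | p.1 ∈ SkelNodes E ∧ p.2 ∈ SkelNodes E ∧ ∃ u ∈ p.1, ∃ v ∈ p.2, (u, v) ∈ E}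

/-- The induced subgraph on `N` (w.r.t. the ambient edge set `F`) is a directed path:
its nodes can be ordered `w 0, …, w r` so that its edges are exactly the consecutive
pairs. -/
def IsPathGraphOn {W : Type*} (N : Set W) (F : Set (W × W)) : Prop :=
  ∃ (r : ℕ) (w : ℕ → W), (∀ s ≤ r, ∀ t ≤ r, w s = w t → s = t) ∧
    {x | ∃ t ≤ r, w t = x} = N ∧
    (∀ p : W × W, (p ∈ F ∧ p.1 ∈ N ∧ p.2 ∈ N) ↔ ∃ t < r, p = (w t, w (t + 1)))

/-- The induced subgraph on `C` is a single directed cycle: its nodes can be cyclically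
ordered so that its edges are exactly the consecutive pairs. -/
def IsSingleCycleOn {V : Type*} (C : Set V) (E : Set (V × V)) : Prop :=
  ∃ (l : ℕ) (w : ℕ → V), 1 ≤ l ∧ (∀ s < l, ∀ t < l, w s = w t → s = t) ∧
    {x | ∃ t < l, w t = x} = C ∧
    (∀ p : V × V, (p ∈ E ∧ p.1 ∈ C ∧ p.2 ∈ C) ↔ ∃ t < l, p = (w t, w ((t + 1) % l)))

/-- `G ∈ 𝒢_{n,1}` is reduced (Definition 5 of the paper): (1) the skeleton graph `S`
with self-loops removed is a directed tree and the core `S*` of `S` is a directed path;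
(2) every edge of `S` between distinct components comes from a unique edge of `G`;
(3) every node of `S` with a self-loop is an out-neighbor of `S*`, and every nontrivial
strong component of `G` is a single directed cycle. -/
def ReducedGraph (n : ℕ) (E : Set (Node n × Node n)) : Prop :=
  MemG n E ∧
  IsDirectedTree (SkelNodes E) {p ∈ SkelEdges E | p.1 ≠ p.2} ∧
  IsPathGraphOn (CoreOn (SkelNodes E) (SkelEdges E)) (SkelEdges E) ∧
  (∀ p ∈ SkelEdges E, p.1 ≠ p.2 →
    ∃! e : Node n × Node n, e ∈ E ∧ e.1 ∈ p.1 ∧ e.2 ∈ p.2) ∧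
  (∀ C : Set (Node n), (C, C) ∈ SkelEdges E →
    (∃ C' ∈ CoreOn (SkelNodes E) (SkelEdges E), (C', C) ∈ SkelEdges E) ∧
    IsSingleCycleOn C E)

/-- `V(j)`: nodes reachable from `β` by a walk of length `j`. -/
def VSet {n : ℕ} (E : Set (Node n × Node n)) (j : ℕ) : Set (Node n) :=
  {v | ∃ w : ℕ → Node n, IsWalk E j w (none : Node n) v}

/-- `V_p⁺`: nodes reachable by a walk from some node of the component `C`. -/
def VpPlus {n : ℕ} (E : Set (Node n × Node n)) (C : Set (Node n)) : Set (Node n) :=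
  {v | ∃ u ∈ C, Reachable E u v}

/-!
Since no edge ends at `β`, the `i`-th entry of `A ^ (j - 1) * b` is the sum, over all walks of
length `j` from `β` to `α_i`, of the product of the weights `f ^ ν(e)` of their edges, so everything
reduces to the uniqueness of such a walk, i.e. to showing that two walks of equal length from `β` to
predecessors `a`, `a'` of a node `v` have `a = a'`.

A strong component is entered by at most one edge, because the skeleton is a tree. If `a` and `a'`
both lie outside the component of `v`, this edge determines them; if both lie inside, they are the
predecessor of `v` on a directed cycle. In the mixed case, say `a` outside and `a'` inside, the
component of `v` is cyclic, so its entering edge starts in the core, where all walks from `β` to a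
given node have the same length. But the walk to `a'` must itself use the entering edge, hence
visits `a` at a time strictly smaller than the common length.
-/

section Walk

variable {V : Type*} {E F : Set (V × V)} {k : ℕ} {w : ℕ → V} {u v x : V}

theorem IsWalk.take (h : IsWalk E k w u v) {s : ℕ} (hs : s ≤ k) : IsWalk E s w u (w s) :=
  ⟨h.1, rfl, fun t ht => h.2.2 t (ht.trans_le hs)⟩

theorem IsWalk.last_edge (h : IsWalk E (k + 1) w u v) : (w k, v) ∈ E :=
  h.2.1 ▸ h.2.2 k k.lt_succ_self

theorem IsWalk.snoc (h : IsWalk E k w u v) (hvx : (v, x) ∈ E) :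
    IsWalk E (k + 1) (Function.update w (k + 1) x) u x := by
  obtain ⟨h0, hk, hstep⟩ := h
  have hold {t : ℕ} (ht : t ≤ k) : Function.update w (k + 1) x t = w t :=
    Function.update_of_ne (by lia) ..
  refine ⟨(hold k.zero_le).trans h0, Function.update_self .., fun t ht => ?_⟩
  rw [hold (Nat.le_of_lt_succ ht)]
  obtain rfl | htk := (Nat.le_of_lt_succ ht).eq_or_lt
  · rwa [Function.update_self, hk]
  · rw [hold htk]
    exact hstep t htk

theorem IsWalk.length_eq_zero (hv : ∀ e ∈ E, e.2 ≠ v) (h : IsWalk E k w u v) : k = 0 := by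
  cases k with
  | zero => rfl
  | succ k => exact absurd rfl (hv _ h.last_edge)

theorem IsWalk.exists_entry (h : IsWalk E k w u v) {C : Set V} (hu : u ∉ C) (hv : v ∈ C) :
    ∃ t < k, w t ∉ C ∧ w (t + 1) ∈ C := by
  by_contra! hstay
  have hout : ∀ t ≤ k, w t ∉ C := by
    intro t
    induction t with
    | zero => exact fun _ => h.1.symm ▸ hu
    | succ t ih => exact fun ht => hstay t ht (ih (Nat.le_of_succ_le ht))
  exact hout k le_rfl (h.2.1.symm ▸ hv)

theorem reachable_iff_reflTransGen :
    Reachable E u v ↔ Relation.ReflTransGen (fun a b => (a, b) ∈ E) u v := by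
  constructor
  · rintro ⟨k, w, h⟩
    induction k generalizing v with
    | zero => rw [← h.1, ← h.2.1]
    | succ k ih => exact (ih (h.take k.le_succ)).tail h.last_edge
  · intro h
    induction h with
    | refl => exact ⟨0, fun _ => u, rfl, rfl, by simp⟩
    | tail _ e ih =>
      obtain ⟨k, w, h⟩ := ih
      exact ⟨k + 1, _, h.snoc e⟩

theorem Reachable.refl (u : V) : Reachable E u u :=
  reachable_iff_reflTransGen.2 .refl

theorem Reachable.single (h : (u, v) ∈ E) : Reachable E u v :=
  reachable_iff_reflTransGen.2 (.single h)

theorem Reachable.trans (huv : Reachable E u v) (hvx : Reachable E v x) : Reachable E u x :=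
  reachable_iff_reflTransGen.2
    ((reachable_iff_reflTransGen.1 huv).trans (reachable_iff_reflTransGen.1 hvx))

theorem Reachable.mono (hEF : E ⊆ F) (h : Reachable E u v) : Reachable F u v := by
  obtain ⟨k, w, h0, hk, hstep⟩ := h
  exact ⟨k, w, h0, hk, fun t ht => hEF (hstep t ht)⟩

theorem IsWalk.reachable_end (h : IsWalk E k w u v) {s : ℕ} (hs : s ≤ k) :
    Reachable E (w s) v :=
  ⟨k - s, fun t => w (s + t), rfl, by simpa only [Nat.add_sub_cancel' hs] using h.2.1,
    fun t ht => h.2.2 (s + t) (by lia)⟩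

/-- Walks from `u` are determined by their length and their endpoint. Since walks are encoded as
functions on all of `ℕ`, only the values up to the length are compared. -/
def UniqueWalksFrom (E : Set (V × V)) (u : V) : Prop :=
  ∀ ⦃k : ℕ⦄ ⦃w w' : ℕ → V⦄ ⦃v : V⦄, IsWalk E k w u v → IsWalk E k w' u v → ∀ t ≤ k, w t = w' t

theorem uniqueWalksFrom_of_pred_unique
    (hpred : ∀ ⦃k : ℕ⦄ ⦃w w' : ℕ → V⦄ ⦃a a' v : V⦄, IsWalk E k w u a → IsWalk E k w' u a' →
      (a, v) ∈ E → (a', v) ∈ E → a = a') :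
    UniqueWalksFrom E u := by
  intro k
  induction k with
  | zero =>
    intro w w' v h h' t ht
    rw [Nat.le_zero.1 ht, h.1, h'.1]
  | succ k ih =>
    intro w w' v h h' t ht
    obtain rfl | htk := ht.eq_or_lt
    · rw [h.2.1, h'.2.1]
    · have hlast : w k = w' k :=
        hpred (h.take k.le_succ) (h'.take k.le_succ) h.last_edge h'.last_edge
      exact ih (h.take k.le_succ) (hlast ▸ h'.take k.le_succ) t (Nat.le_of_lt_succ htk)

end Walk

section PredUnique

variable {V : Type*} {F : Set (V × V)} {k : ℕ} {w : ℕ → V} {r a a' v : V}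

theorem IsPath.snoc (h : IsPath F k w r a) (hav : (a, v) ∈ F) (hva : ¬ Reachable F v a) :
    IsPath F (k + 1) (Function.update w (k + 1) v) r v := by
  obtain ⟨hwalk, hinj⟩ := h
  have hold {t : ℕ} (ht : t ≤ k) : Function.update w (k + 1) v t = w t :=
    Function.update_of_ne (by lia) ..
  have hne {t : ℕ} (ht : t ≤ k) : w t ≠ v := fun hv => hva (hv ▸ hwalk.reachable_end ht)
  refine ⟨hwalk.snoc hav, fun s hs t ht hst => ?_⟩
  obtain rfl | hs' := hs.eq_or_lt <;> obtain rfl | ht' := ht.eq_or_lt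
  · rfl
  · rw [Function.update_self, hold (Nat.le_of_lt_succ ht')] at hst
    exact absurd hst.symm (hne (Nat.le_of_lt_succ ht'))
  · rw [Function.update_self, hold (Nat.le_of_lt_succ hs')] at hst
    exact absurd hst (hne (Nat.le_of_lt_succ hs'))
  · rw [hold (Nat.le_of_lt_succ hs'), hold (Nat.le_of_lt_succ ht')] at hst
    exact hinj s (Nat.le_of_lt_succ hs') t (Nat.le_of_lt_succ ht') hst

theorem UniquePathFrom.pred_unique (hv : UniquePathFrom F r v)
    (ha : UniquePathFrom F r a) (ha' : UniquePathFrom F r a')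
    (hav : (a, v) ∈ F) (hav' : (a', v) ∈ F)
    (hva : ¬ Reachable F v a) (hva' : ¬ Reachable F v a') : a = a' := by
  obtain ⟨k, w, hw⟩ := ha.1
  obtain ⟨k', w', hw'⟩ := ha'.1
  obtain ⟨hk, heq⟩ := hv.2 _ _ _ _ (hw.snoc hav hva) (hw'.snoc hav' hva')
  obtain rfl : k = k' := Nat.succ_injective hk
  have hwk : w k = w' k := by simpa using heq k k.le_succ
  rwa [hw.1.2.1, hw'.1.2.1] at hwk

theorem IsSingleCycleOn.pred_unique {C : Set V} {E : Set (V × V)} (hC : IsSingleCycleOn C E)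
    (ha : a ∈ C) (ha' : a' ∈ C) (hv : v ∈ C) (hav : (a, v) ∈ E) (hav' : (a', v) ∈ E) :
    a = a' := by
  obtain ⟨l, w, hl, hinj, -, hedge⟩ := hC
  obtain ⟨t, ht, hat⟩ := (hedge (a, v)).1 ⟨hav, ha, hv⟩
  obtain ⟨s, hs, has⟩ := (hedge (a', v)).1 ⟨hav', ha', hv⟩
  rw [Prod.mk.injEq] at hat has
  have hsucc : t + 1 ≡ s + 1 [MOD l] :=
    hinj _ (Nat.mod_lt _ hl) _ (Nat.mod_lt _ hl) (hat.2.symm.trans has.2)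
  have hts : t = s := (Nat.ModEq.add_right_cancel' 1 hsucc).eq_of_lt_of_lt ht hs
  rw [hat.1, has.1, hts]

end PredUnique

section Skeleton

variable {V : Type*} {E : Set (V × V)} {C D : Set V} {u v : V}

theorem mem_strongComp_self (u : V) : u ∈ StrongComp E u :=
  ⟨.refl u, .refl u⟩

theorem mem_strongComp_iff : u ∈ StrongComp E v ↔ StrongComp E u = StrongComp E v := by
  refine ⟨fun h => ?_, fun h => h ▸ mem_strongComp_self u⟩
  ext x
  exact ⟨fun hx => ⟨h.1.trans hx.1, hx.2.trans h.2⟩, fun hx => ⟨h.2.trans hx.1, hx.2.trans h.1⟩⟩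

theorem mem_skelEdges_iff :
    (C, D) ∈ SkelEdges E ↔ ∃ u v, (u, v) ∈ E ∧ StrongComp E u = C ∧ StrongComp E v = D := by
  constructor
  · rintro ⟨⟨c, rfl⟩, ⟨d, rfl⟩, u, hu, v, hv, huv⟩
    exact ⟨u, v, huv, mem_strongComp_iff.1 hu, mem_strongComp_iff.1 hv⟩
  · rintro ⟨u, v, huv, rfl, rfl⟩
    exact ⟨⟨u, rfl⟩, ⟨v, rfl⟩, u, mem_strongComp_self u, v, mem_strongComp_self v, huv⟩

theorem strongComp_mem_skelEdges (h : (u, v) ∈ E) :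
    (StrongComp E u, StrongComp E v) ∈ SkelEdges E :=
  mem_skelEdges_iff.2 ⟨u, v, h, rfl, rfl⟩

theorem Reachable.of_skelEdges
    (h : Reachable (SkelEdges E) (StrongComp E u) (StrongComp E v)) : Reachable E u v := by
  suffices hD : ∀ D, Relation.ReflTransGen (fun C D => (C, D) ∈ SkelEdges E) (StrongComp E u) D →
      ∀ x ∈ D, Reachable E u x from
    hD _ (reachable_iff_reflTransGen.1 h) v (mem_strongComp_self v)
  intro D hD
  induction hD with
  | refl => exact fun x hx => hx.1
  | tail _ hCD ih =>
    intro x hx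
    obtain ⟨a, b, hab, rfl, rfl⟩ := mem_skelEdges_iff.1 hCD
    exact (ih a (mem_strongComp_self a)).trans ((Reachable.single hab).trans hx.1)

theorem not_reachable_skelEdges (h : (u, v) ∈ E) (hne : StrongComp E u ≠ StrongComp E v) :
    ¬ Reachable (SkelEdges E) (StrongComp E v) (StrongComp E u) :=
  fun hvu => hne (mem_strongComp_iff.1 ⟨hvu.of_skelEdges, .single h⟩)

theorem mem_cycSucc_of_loop (h : (u, u) ∈ E) : u ∈ CycSucc E :=
  ⟨u, ⟨1, fun _ => u, le_rfl, ⟨rfl, rfl, fun _ _ => h⟩, by lia⟩, .refl u⟩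

theorem mem_cycSucc_of_edge (hu : u ∈ CycSucc E) (h : (u, v) ∈ E) : v ∈ CycSucc E :=
  let ⟨c, hc, hcu⟩ := hu
  ⟨c, hc, hcu.trans (.single h)⟩

/-- Every strong component is entered by at most one edge from outside: this is what the tree
structure of the skeleton of a reduced graph says about the graph itself. -/
def HasUniqueEntries (E : Set (V × V)) : Prop :=
  ∀ ⦃a v a' v' : V⦄, (a, v) ∈ E → (a', v') ∈ E → StrongComp E v' = StrongComp E v →
    StrongComp E a ≠ StrongComp E v → StrongComp E a' ≠ StrongComp E v → a = a' ∧ v = v'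

theorem hasUniqueEntries_of_isDirectedTree
    (htree : IsDirectedTree (SkelNodes E) {p ∈ SkelEdges E | p.1 ≠ p.2})
    (hedge : ∀ p ∈ SkelEdges E, p.1 ≠ p.2 →
      ∃! e : V × V, e ∈ E ∧ e.1 ∈ p.1 ∧ e.2 ∈ p.2) :
    HasUniqueEntries E := by
  intro a v a' v' hav hav' hv hne hne'
  obtain ⟨r, -, hpath, -⟩ := htree
  have hskel' : (StrongComp E a', StrongComp E v) ∈ SkelEdges E :=
    hv ▸ strongComp_mem_skelEdges hav'
  have hback {b x : V} (hbx : (b, x) ∈ E) (hbne : StrongComp E b ≠ StrongComp E x) :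
      ¬ Reachable {p ∈ SkelEdges E | p.1 ≠ p.2} (StrongComp E x) (StrongComp E b) :=
    fun h => not_reachable_skelEdges hbx hbne (h.mono (Set.sep_subset _ _))
  have hcomp : StrongComp E a = StrongComp E a' :=
    (hpath _ ⟨v, rfl⟩).pred_unique (hpath _ ⟨a, rfl⟩) (hpath _ ⟨a', rfl⟩)
      ⟨strongComp_mem_skelEdges hav, hne⟩ ⟨hskel', hne'⟩ (hback hav hne)
      (hv ▸ hback hav' (hv.symm ▸ hne'))
  have heq : (a, v) = (a', v') := (hedge _ (strongComp_mem_skelEdges hav) hne).unique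
    ⟨hav, mem_strongComp_self a, mem_strongComp_self v⟩
    ⟨hav', mem_strongComp_iff.2 hcomp.symm, mem_strongComp_iff.2 hv⟩
  exact Prod.mk.inj heq

end Skeleton

section WalkUniqueness

variable {V : Type*} {E : Set (V × V)} {k k' : ℕ} {w w' : ℕ → V} {β a a' v : V}

theorem HasUniqueEntries.walk_length_eq (hent : HasUniqueEntries E) (hβ : ∀ e ∈ E, e.2 ≠ β)
    (hv : StrongComp E v ∉ CycSucc (SkelEdges E))
    (h : IsWalk E k w β v) (h' : IsWalk E k' w' β v) : k = k' := by
  induction k generalizing v k' with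
  | zero =>
    obtain rfl : β = v := h.1.symm.trans h.2.1
    exact (h'.length_eq_zero hβ).symm
  | succ k ih =>
    cases k' with
    | zero =>
      obtain rfl : β = v := h'.1.symm.trans h'.2.1
      exact h.length_eq_zero hβ
    | succ k' =>
      have hpred {x : V} (hx : (x, v) ∈ E) : StrongComp E x ≠ StrongComp E v := fun hxv =>
        hv (mem_cycSucc_of_loop (mem_skelEdges_iff.2 ⟨x, v, hx, hxv, rfl⟩))
      have hlast : w k = w' k' :=
        (hent h.last_edge h'.last_edge rfl (hpred h.last_edge) (hpred h'.last_edge)).1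
      have hcore : StrongComp E (w k) ∉ CycSucc (SkelEdges E) := fun hmem =>
        hv (mem_cycSucc_of_edge hmem (strongComp_mem_skelEdges h.last_edge))
      rw [ih hcore (h.take k.le_succ) (hlast ▸ h'.take k'.le_succ)]

theorem HasUniqueEntries.pred_notMem_cycSucc (hent : HasUniqueEntries E)
    (hloop : (StrongComp E v, StrongComp E v) ∈ SkelEdges E)
    (hout : ∃ C ∉ CycSucc (SkelEdges E), (C, StrongComp E v) ∈ SkelEdges E)
    (hav : (a, v) ∈ E) (hne : StrongComp E a ≠ StrongComp E v) :
    StrongComp E a ∉ CycSucc (SkelEdges E) := by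
  obtain ⟨C, hC, hCv⟩ := hout
  obtain ⟨c, x, hcx, rfl, hxv⟩ := mem_skelEdges_iff.1 hCv
  have hcv : StrongComp E c ≠ StrongComp E v := fun h => hC (h ▸ mem_cycSucc_of_loop hloop)
  obtain ⟨rfl, -⟩ := hent hav hcx hxv hne hcv
  exact hC

theorem HasUniqueEntries.strongComp_pred_eq (hent : HasUniqueEntries E) (hβ : ∀ e ∈ E, e.2 ≠ β)
    (hout : ∀ C, (C, C) ∈ SkelEdges E → ∃ C' ∉ CycSucc (SkelEdges E), (C', C) ∈ SkelEdges E)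
    (h : IsWalk E k w β a) (h' : IsWalk E k w' β a') (hav : (a, v) ∈ E) (hav' : (a', v) ∈ E)
    (hcomp' : StrongComp E a' = StrongComp E v) : StrongComp E a = StrongComp E v := by
  by_contra hne
  have hβv : β ∉ StrongComp E v := by
    rintro ⟨⟨l, p, hp⟩, -⟩
    obtain rfl := hp.length_eq_zero hβ
    exact hβ _ hav (hp.1.symm.trans hp.2.1)
  obtain ⟨s, hs, hsv, hsv'⟩ := h'.exists_entry hβv (mem_strongComp_iff.2 hcomp')
  have has : a = w' s := (hent hav (h'.2.2 s hs) (mem_strongComp_iff.1 hsv') hne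
    fun heq => hsv (mem_strongComp_iff.2 heq)).1
  have hloop : (StrongComp E v, StrongComp E v) ∈ SkelEdges E :=
    mem_skelEdges_iff.2 ⟨a', v, hav', hcomp', rfl⟩
  have hcore : StrongComp E a ∉ CycSucc (SkelEdges E) :=
    hent.pred_notMem_cycSucc hloop (hout _ hloop) hav hne
  have hks : k = s := hent.walk_length_eq hβ hcore h (has ▸ h'.take hs.le)
  exact hs.ne' hks

theorem HasUniqueEntries.uniqueWalksFrom (hent : HasUniqueEntries E) (hβ : ∀ e ∈ E, e.2 ≠ β)
    (hout : ∀ C, (C, C) ∈ SkelEdges E → ∃ C' ∉ CycSucc (SkelEdges E), (C', C) ∈ SkelEdges E)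
    (hcyc : ∀ C, (C, C) ∈ SkelEdges E → IsSingleCycleOn C E) :
    UniqueWalksFrom E β := by
  refine uniqueWalksFrom_of_pred_unique fun k w w' a a' v h h' hav hav' => ?_
  by_cases ha : StrongComp E a = StrongComp E v
  · have ha' : StrongComp E a' = StrongComp E v :=
      hent.strongComp_pred_eq hβ hout h' h hav' hav ha
    have hloop : (StrongComp E v, StrongComp E v) ∈ SkelEdges E :=
      mem_skelEdges_iff.2 ⟨a, v, hav, ha, rfl⟩
    exact (hcyc _ hloop).pred_unique (mem_strongComp_iff.2 ha) (mem_strongComp_iff.2 ha')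
      (mem_strongComp_self v) hav hav'
  · have ha' : StrongComp E a' ≠ StrongComp E v :=
      fun ha' => ha (hent.strongComp_pred_eq hβ hout h h' hav hav' ha')
    exact (hent hav hav' rfl ha ha').1

theorem ReducedGraph.uniqueWalksFrom {n : ℕ} {E : Set (Node n × Node n)}
    (hred : ReducedGraph n E) : UniqueWalksFrom E none := by
  obtain ⟨⟨hβ, -⟩, htree, -, hedge, hloop⟩ := hred
  refine (hasUniqueEntries_of_isDirectedTree htree hedge).uniqueWalksFrom hβ (fun C hC => ?_)
    fun C hC => (hloop C hC).2
  obtain ⟨C', hC', hCC'⟩ := (hloop C hC).1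
  exact ⟨C', hC'.2, hCC'⟩

end WalkUniqueness

section WeightedPair

open scoped Matrix

/-- The pair `(A, b)` of a state matrix and a control vector carries the weight `g e` of each edge
`e ∈ E` and vanishes off `E`. As in `Node`, the control node `β` is `none`; the entry `A i j`
belongs to the edge from `j` to `i`, so that `A` acts on column vectors. -/
structure IsWeightedPair {R ι : Type*} [Zero R] (E : Set (Option ι × Option ι))
    (g : Option ι × Option ι → R) (A : Matrix ι ι R) (b : ι → R) : Prop where
  state : ∀ i j, ((some j, some i) ∈ E → A i j = g (some j, some i)) ∧
    ((some j, some i) ∉ E → A i j = 0)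
  control : ∀ i, ((none, some i) ∈ E → b i = g (none, some i)) ∧
    ((none, some i) ∉ E → b i = 0)

variable {R ι : Type*} [Fintype ι] [DecidableEq ι] {E : Set (Option ι × Option ι)}
  {g : Option ι × Option ι → R} {A : Matrix ι ι R} {b : ι → R}
  {k : ℕ} {w : ℕ → Option ι} {i : ι}

theorem IsWeightedPair.pow_mulVec_eq_zero [Semiring R] (h : IsWeightedPair E g A b)
    (hi : ¬ ∃ w, IsWalk E (k + 1) w none (some i)) : (A ^ k *ᵥ b) i = 0 := by
  induction k generalizing i with
  | zero =>
    rw [pow_zero, Matrix.one_mulVec]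
    have hstart : IsWalk E 0 (fun _ => none) none none := ⟨rfl, rfl, by simp⟩
    exact (h.control i).2 fun he => hi ⟨_, hstart.snoc he⟩
  | succ k ih =>
    rw [pow_succ', ← Matrix.mulVec_mulVec, Matrix.mulVec_apply_eq_sum]
    refine Finset.sum_eq_zero fun m _ => ?_
    by_cases he : (some m, some i) ∈ E
    · rw [ih fun ⟨_, hw⟩ => hi ⟨_, hw.snoc he⟩, mul_zero]
    · rw [(h.state i m).2 he, zero_mul]

theorem IsWeightedPair.pow_mulVec_eq_prod [CommSemiring R] (h : IsWeightedPair E g A b)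
    (hβ : ∀ e ∈ E, e.2 ≠ none) (huniq : UniqueWalksFrom E none)
    (hw : IsWalk E (k + 1) w none (some i)) :
    (A ^ k *ᵥ b) i = ∏ t ∈ Finset.range (k + 1), g (w t, w (t + 1)) := by
  induction k generalizing i with
  | zero =>
    have hedge : (none, some i) ∈ E := hw.1 ▸ hw.last_edge
    rw [pow_zero, Matrix.one_mulVec, Finset.prod_range_one, hw.1, hw.2.1, (h.control i).1 hedge]
  | succ k ih =>
    have hinit := hw.take (k + 1).le_succ
    obtain ⟨m, hm : w (k + 1) = some m⟩ := Option.ne_none_iff_exists'.1 (hβ _ hinit.last_edge)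
    have hedge : (some m, some i) ∈ E := hm ▸ hw.last_edge
    rw [pow_succ', ← Matrix.mulVec_mulVec, Matrix.mulVec_apply_eq_sum]
    calc ∑ l, A i l * (A ^ k *ᵥ b) l
        = A i m * (A ^ k *ᵥ b) m := by
          refine Finset.sum_eq_single m (fun m' _ hne => ?_) (by simp)
          by_cases he : (some m', some i) ∈ E
          · rw [h.pow_mulVec_eq_zero, mul_zero]
            rintro ⟨w', hw'⟩
            have hlast := huniq (hw'.snoc he) hw (k + 1) (k + 1).le_succ
            rw [Function.update_of_ne (by lia), hw'.2.1, hm] at hlast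
            exact hne (Option.some_injective ι hlast)
          · rw [(h.state i m').2 he, zero_mul]
      _ = ∏ t ∈ Finset.range (k + 2), g (w t, w (t + 1)) := by
          rw [(h.state i m).1 hedge, ih (hm ▸ hinit), Finset.prod_range_succ _ (k + 1), hm, hw.2.1,
            mul_comm]

theorem IsWeightedPair.pow_mulVec_eq_rpow {c : ℝ} (hc : 0 ≤ c) {ν : Option ι × Option ι → ℝ}
    (hν : ∀ e ∈ E, 0 ≤ ν e) {A : Matrix ι ι ℝ} {b : ι → ℝ}
    (h : IsWeightedPair E (fun e => c ^ ν e) A b)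
    (hβ : ∀ e ∈ E, e.2 ≠ none) (huniq : UniqueWalksFrom E none)
    (hw : IsWalk E (k + 1) w none (some i)) :
    (A ^ k *ᵥ b) i = c ^ (∑ t ∈ Finset.range (k + 1), ν (w t, w (t + 1))) := by
  rw [h.pow_mulVec_eq_prod hβ huniq hw, Real.rpow_sum_of_nonneg hc]
  exact fun t ht => hν _ (hw.2.2 t (Finset.mem_range.1 ht))

end WeightedPair

theorem integrable_rpow_of_bounded {S : Type*} [MeasurableSpace S] {μ : Measure S}
    [IsFiniteMeasure μ] {f : S → ℝ} (hf : AEMeasurable f μ) (hfbd : ∃ C, ∀ σ, |f σ| ≤ C)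
    (hf0 : ∀ σ, 0 ≤ f σ) {r : ℝ} (hr : 0 ≤ r) : Integrable (fun σ => f σ ^ r) μ := by
  obtain ⟨C, hC⟩ := hfbd
  refine .of_bound (hf.pow_const r).aestronglyMeasurable (C ^ r) (.of_forall fun σ => ?_)
  rw [Real.norm_of_nonneg (Real.rpow_nonneg (hf0 σ) r)]
  exact Real.rpow_le_rpow (hf0 σ) ((le_abs_self _).trans (hC σ)) hr

theorem stmt14_general {ι : Type*} [Fintype ι] [DecidableEq ι] {E : Set (Option ι × Option ι)}
    (hβ : ∀ e ∈ E, e.2 ≠ none) (huniq : UniqueWalksFrom E none)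
    {S : Type*} [MeasurableSpace S] {μ : Measure S} [IsFiniteMeasure μ]
    {f : S → ℝ} (hf : AEMeasurable f μ) (hfbd : ∃ C, ∀ σ, |f σ| ≤ C) (hf0 : ∀ σ, 0 ≤ f σ)
    {ν : Option ι × Option ι → ℝ} (hν : ∀ e ∈ E, 0 ≤ ν e)
    {A : S → Matrix ι ι ℝ} {b : S → ι → ℝ}
    (hAb : ∀ σ, IsWeightedPair E (fun e => f σ ^ ν e) (A σ) (b σ)) (k : ℕ) (i : ι) :
    (∀ w, IsWalk E (k + 1) w none (some i) →
      (∫ σ, (A σ ^ k).mulVec (b σ) ∂μ) i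
        = ∫ σ, f σ ^ (∑ t ∈ Finset.range (k + 1), ν (w t, w (t + 1))) ∂μ) ∧
    ((¬ ∃ w, IsWalk E (k + 1) w none (some i)) →
      (∫ σ, (A σ ^ k).mulVec (b σ) ∂μ) i = 0) := by
  have hwalk {i w} (hw : IsWalk E (k + 1) w none (some i)) σ :=
    (hAb σ).pow_mulVec_eq_rpow (hf0 σ) hν hβ huniq hw
  have hnowalk {i} (hi : ¬ ∃ w, IsWalk E (k + 1) w none (some i)) σ :=
    (hAb σ).pow_mulVec_eq_zero hi
  have hint : ∀ i, Integrable (fun σ => (A σ ^ k).mulVec (b σ) i) μ := by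
    intro i
    by_cases hi : ∃ w, IsWalk E (k + 1) w none (some i)
    · obtain ⟨w, hw⟩ := hi
      simp only [hwalk hw]
      exact integrable_rpow_of_bounded hf hfbd hf0
        (Finset.sum_nonneg fun t ht => hν _ (hw.2.2 t (Finset.mem_range.1 ht)))
    · simpa only [hnowalk hi] using integrable_const (0 : ℝ)
  rw [eval_integral hint]
  exact ⟨fun w hw => by simp only [hwalk hw], fun hi => by simp only [hnowalk hi, integral_zero]⟩

/-- Lemma 7 of the paper: for the pair `(A, b)` built from a
nonnegative bounded continuous function `f` and nonnegative edge exponents `ν`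
(entry `f^{ν(e)}` on each edge `e` of the reduced graph `G`), the `i`-th entry of the
`j`-th moment `∫ A(σ)^{j−1} b(σ) dμ` equals `∫ f^{ν(τ)} dμ` where `τ` is the unique
walk of length `j` from `β` to `α_i` (and equals `0` if there is no such walk). -/
theorem stmt14 {n : ℕ} (hn : 1 ≤ n) (E : Set (Node n × Node n))
    (hred : ReducedGraph n E)
    (S : Type*) [TopologicalSpace S] [MeasurableSpace S] [BorelSpace S]
    (μ : Measure S) [IsProbabilityMeasure μ]
    (f : S → ℝ) (hf : Continuous f) (hfbd : ∃ C, ∀ σ, |f σ| ≤ C)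
    (hf0 : ∀ σ, 0 ≤ f σ)
    (ν : Node n × Node n → ℝ) (hν : ∀ e ∈ E, 0 ≤ ν e)
    (A : S → Fin n → Fin n → ℝ) (b : S → Fin n → ℝ)
    (hAc : Continuous A) (hbc : Continuous b)
    (hAbd : ∃ C, ∀ σ i j, |A σ i j| ≤ C) (hbbd : ∃ C, ∀ σ i, |b σ i| ≤ C)
    (hAdef : ∀ σ (i j : Fin n),
      (((some j : Node n), (some i : Node n)) ∈ E →
          A σ i j = f σ ^ ν ((some j : Node n), (some i : Node n))) ∧
      (((some j : Node n), (some i : Node n)) ∉ E → A σ i j = 0))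
    (hbdef : ∀ σ (i : Fin n),
      (((none : Node n), (some i : Node n)) ∈ E →
          b σ i = f σ ^ ν ((none : Node n), (some i : Node n))) ∧
      (((none : Node n), (some i : Node n)) ∉ E → b σ i = 0)) :
    ∀ j : ℕ, 1 ≤ j → ∀ i : Fin n,
      (∀ w : ℕ → Node n, IsWalk E j w (none : Node n) (some i) →
        (∫ σ, (Matrix.of (A σ) ^ (j - 1)).mulVec (b σ) ∂μ) i
          = ∫ σ, f σ ^ (∑ t ∈ Finset.range j, ν (w t, w (t + 1))) ∂μ) ∧
      ((¬ ∃ w : ℕ → Node n, IsWalk E j w (none : Node n) (some i)) →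
        (∫ σ, (Matrix.of (A σ) ^ (j - 1)).mulVec (b σ) ∂μ) i = 0) := by
  intro j hj
  obtain ⟨k, rfl⟩ := Nat.exists_eq_add_of_le' hj
  exact stmt14_general hred.1.1 hred.uniqueWalksFrom hf.measurable.aemeasurable hfbd hf0 hν
    (A := fun σ => Matrix.of (A σ)) (fun σ => ⟨hAdef σ, hbdef σ⟩) k
end

section
/- Let n ≥ 1 and let G = (V, E) ∈ 𝒢_{n,1} be acyclic (G contains no cycle) and contain no directed spanning path (no path of G visits all n+1 nodes). Then for every n × n real matrix A and every b ∈ ℝⁿ with A_{ij} = 0 whenever (α_j, α_i) ∉ E and b_i = 0 whenever (β, α_i) ∉ E, one has A^k b = 0 for every integer k ≥ n − 1; consequently, the ℝ-linear span of { A^k b : k ∈ ℕ } is a proper subspace of ℝⁿ. -/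
open MeasureTheory

/-!
If `(A ^ k *ᵥ b) i ≠ 0`, then following nonzero entries back from `i` to a nonzero entry of `b`
traces a walk of length `k + 1` from `β` to `α_i`. In an acyclic digraph every walk is a path, and a
path with at least `n` edges visits all `n + 1` nodes; without a spanning path this forces
`k + 1 < n`. Hence `A ^ k *ᵥ b` vanishes for `k ≥ n - 1`, and the remaining `n - 1` vectors cannot
span an `n`-dimensional space.
-/

section Walk

variable {V : Type*} {E : Set (V × V)} {k : ℕ} {w : ℕ → V} {u v : V}

/-- The digraph with edge set `E` has a directed spanning path starting at `u`. The starting node is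
fixed because only walks leaving the control node `β` contribute to `A ^ k *ᵥ b`. -/
def HasSpanningPathFrom (E : Set (V × V)) (u : V) : Prop :=
  ∃ (k : ℕ) (w : ℕ → V) (v : V), IsPath E k w u v ∧ ∀ x, ∃ t ≤ k, w t = x

theorem IsWalk.cons {x : V} (hx : (x, u) ∈ E) (h : IsWalk E k w u v) :
    IsWalk E (k + 1) (fun t => Nat.casesOn t x w) x v := by
  obtain ⟨hstart, hend, hstep⟩ := h
  refine ⟨rfl, hend, fun t ht => ?_⟩
  cases t with
  | zero =>
    change (x, w 0) ∈ E
    rwa [hstart]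
  | succ t => exact hstep t (Nat.lt_of_succ_lt_succ ht)

theorem IsWalk.segment (h : IsWalk E k w u v) {s t : ℕ} (hst : s ≤ t) (htk : t ≤ k) :
    IsWalk E (t - s) (fun r => w (s + r)) (w s) (w t) :=
  ⟨rfl, congrArg w (Nat.add_sub_cancel' hst), fun r hr => h.2.2 (s + r) (by lia)⟩

theorem IsWalk.exists_onCycle (h : IsWalk E k w u u) (hk : 1 ≤ k) : ∃ x, OnCycle E x := by
  induction k using Nat.strong_induction_on generalizing w u with
  | _ k ih =>
    by_cases hinj : ∀ s < k, ∀ t < k, w s = w t → s = t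
    · exact ⟨u, k, w, hk, h, hinj⟩
    · obtain ⟨s, t, hst, htk, heq⟩ : ∃ s t, s < t ∧ t < k ∧ w s = w t := by
        push Not at hinj
        obtain ⟨s, hs, t, ht, heq, hne⟩ := hinj
        rcases hne.lt_or_gt with hlt | hlt
        exacts [⟨s, t, hlt, ht, heq⟩, ⟨t, s, hlt, hs, heq.symm⟩]
      have hclosed := h.segment hst.le htk.le
      rw [← heq] at hclosed
      exact ih (t - s) (by lia) hclosed (by lia)

theorem IsWalk.isPath (h : IsWalk E k w u v) (hacyc : ∀ x, ¬ OnCycle E x) :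
    IsPath E k w u v := by
  have hne {s t : ℕ} (hst : s < t) (htk : t ≤ k) : w s ≠ w t := by
    intro heq
    have hclosed := h.segment hst.le htk
    rw [← heq] at hclosed
    obtain ⟨x, hx⟩ := hclosed.exists_onCycle (by lia)
    exact hacyc x hx
  refine ⟨h, fun s hs t ht heq => ?_⟩
  rcases lt_trichotomy s t with hlt | rfl | hlt
  exacts [absurd heq (hne hlt ht), rfl, absurd heq.symm (hne hlt hs)]

theorem IsPath.exists_apply_eq_of_card_le [Fintype V] (h : IsPath E k w u v)
    (hcard : Fintype.card V ≤ k + 1) (x : V) : ∃ t ≤ k, w t = x := by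
  have hinj : Function.Injective fun t : Fin (k + 1) => w t := fun s t hst =>
    Fin.ext (h.2 s s.is_le t t.is_le hst)
  obtain ⟨t, ht⟩ := (hinj.bijective_of_nat_card_le (by simpa using hcard)).surjective x
  exact ⟨t, t.is_le, ht⟩

theorem IsWalk.succ_length_lt_card [Fintype V] (h : IsWalk E k w u v)
    (hacyc : ∀ x, ¬ OnCycle E x) (hspan : ¬ HasSpanningPathFrom E u) :
    k + 1 < Fintype.card V := by
  by_contra! hcard
  have hpath := h.isPath hacyc
  exact hspan ⟨k, w, v, hpath, hpath.exists_apply_eq_of_card_le hcard⟩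

end Walk

section Krylov

open Matrix

variable {R ι : Type*} [Semiring R]

theorem exists_isWalk_of_pow_mulVec_apply_ne_zero [Fintype ι] [DecidableEq ι] {V : Type*}
    {E : Set (V × V)} (node : ι → V) {A : Matrix ι ι R}
    (hA : ∀ i j, (node j, node i) ∉ E → A i j = 0) {k : ℕ} {x : ι → R} {i : ι}
    (hi : (A ^ k *ᵥ x) i ≠ 0) : ∃ j, x j ≠ 0 ∧ ∃ w, IsWalk E k w (node j) (node i) := by
  induction k generalizing x with
  | zero =>
    rw [pow_zero, one_mulVec] at hi
    exact ⟨i, hi, fun _ => node i, rfl, rfl, fun t ht => absurd ht t.not_lt_zero⟩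
  | succ k ih =>
    rw [pow_succ, ← mulVec_mulVec] at hi
    obtain ⟨l, hl, w, hw⟩ := ih hi
    obtain ⟨j, -, hj⟩ := Finset.exists_ne_zero_of_sum_ne_zero hl
    have hedge : (node j, node l) ∈ E := not_imp_comm.mp (hA l j) (left_ne_zero_of_mul hj)
    exact ⟨j, right_ne_zero_of_mul hj, _, hw.cons hedge⟩

theorem span_range_ne_top_of_forall_ge_eq_zero [StrongRankCondition R] {M : Type*}
    [AddCommMonoid M] [Module R M] {x : ℕ → M} {m : ℕ} (hx : ∀ k, m ≤ k → x k = 0)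
    (hm : m < Module.finrank R M) : Submodule.span R (Set.range x) ≠ ⊤ := by
  intro htop
  have hle : Submodule.span R (Set.range x) ≤
      Submodule.span R (Set.range fun k : Fin m => x k) := by
    rw [Submodule.span_le]
    rintro _ ⟨k, rfl⟩
    rcases lt_or_ge k m with hk | hk
    · exact Submodule.subset_span ⟨⟨k, hk⟩, rfl⟩
    · simp only [hx k hk, SetLike.mem_coe, zero_mem]
  rw [htop, top_le_iff] at hle
  have hrank : Module.finrank R M ≤ m := by simpa using finrank_le_of_span_eq_top hle
  exact hm.not_ge hrank

theorem stmt18_general [StrongRankCondition R] [Fintype ι] [DecidableEq ι] [Nonempty ι]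
    {E : Set (Option ι × Option ι)} (hacyc : ∀ u, ¬ OnCycle E u)
    (hspan : ¬ HasSpanningPathFrom E none) {A : Matrix ι ι R} {b : ι → R}
    (hA : ∀ i j, (some j, some i) ∉ E → A i j = 0) (hb : ∀ i, (none, some i) ∉ E → b i = 0) :
    (∀ k, Fintype.card ι - 1 ≤ k → A ^ k *ᵥ b = 0) ∧
      Submodule.span R {x | ∃ k : ℕ, x = A ^ k *ᵥ b} ≠ ⊤ := by
  have hzero (k : ℕ) (hk : Fintype.card ι - 1 ≤ k) : A ^ k *ᵥ b = 0 := by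
    by_contra hne
    obtain ⟨i, hi⟩ := Function.ne_iff.mp hne
    obtain ⟨j, hj, w, hw⟩ := exists_isWalk_of_pow_mulVec_apply_ne_zero some hA hi
    have hedge : (none, some j) ∈ E := not_imp_comm.mp (hb j) hj
    have hlength := (hw.cons hedge).succ_length_lt_card hacyc hspan
    rw [Fintype.card_option] at hlength
    lia
  have hrank : Fintype.card ι - 1 < Module.finrank R (ι → R) := by
    rw [Module.finrank_fintype_fun_eq_card]
    exact Nat.sub_one_lt Fintype.card_ne_zero
  refine ⟨hzero, ?_⟩
  simpa only [Set.range, eq_comm] using span_range_ne_top_of_forall_ge_eq_zero hzero hrank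

end Krylov

/-- key step of the necessity proof: if `G ∈ 𝒢_{n,1}` is acyclic and
has no directed spanning path, then every sparse pair `(A, b)` compliant with `G`
satisfies `A^k b = 0` for all `k ≥ n − 1`; hence the span of `{A^k b : k ∈ ℕ}` is a
proper subspace of `ℝⁿ`. -/
theorem stmt18 {n : ℕ} (hn : 1 ≤ n) (E : Set (Node n × Node n)) (hG : MemG n E)
    (hacyc : ∀ u : Node n, ¬ OnCycle E u)
    (hnospan : ¬ ∃ (k : ℕ) (w : ℕ → Node n) (u v : Node n),
        IsPath E k w u v ∧ ∀ x : Node n, ∃ t ≤ k, w t = x)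
    (A : Matrix (Fin n) (Fin n) ℝ) (b : Fin n → ℝ)
    (hA : ∀ i j : Fin n, ((some j : Node n), (some i : Node n)) ∉ E → A i j = 0)
    (hb : ∀ i : Fin n, ((none : Node n), (some i : Node n)) ∉ E → b i = 0) :
    (∀ k : ℕ, n - 1 ≤ k → (A ^ k).mulVec b = 0) ∧
    Submodule.span ℝ {x : Fin n → ℝ | ∃ k : ℕ, x = (A ^ k).mulVec b} ≠ ⊤ := by
  have : Nonempty (Fin n) := Fin.pos_iff_nonempty.mp hn
  simpa only [Fintype.card_fin] using
    stmt18_general hacyc (fun ⟨k, w, v, h⟩ => hnospan ⟨k, w, none, v, h⟩) hA hb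
end
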